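/- Let 𝕄 = ⟨M, 𝒞⟩ be a countable transitive model of GB⁻ and let ℙ be a notion of class forcing for 𝕄 which adds no new sets, i.e. M[G] = M for every ℙ-generic filter G over 𝕄. Then ℙ has the set decision property. -/

import Mathlib

noncomputable section

namespace CF

open scoped ZFSet

attribute [local instance] Classical.propDecidable

/-! ### First-order formulas of the language of set theory -/

/-- First-order `∈`-formulas with variables indexed by `ℕ`. -/
inductive EFormula : Type
  | mem : ℕ → ℕ → EFormula
  | eq : ℕ → ℕ → EFormula
  | not : EFormula → EFormula
  | or : EFormula → EFormula → EFormula
  | ex : ℕ → EFormula → EFormula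

/-- Satisfaction of an `∈`-formula in the structure `⟨D, ∈⟩` under assignment `v`. -/
def EFormula.Sat (D : Set ZFSet) (v : ℕ → ZFSet) : EFormula → Prop
  | .mem i j => v i ∈ v j
  | .eq i j => v i = v j
  | .not φ => ¬ EFormula.Sat D v φ
  | .or φ ψ => EFormula.Sat D v φ ∨ EFormula.Sat D v ψ
  | .ex i φ => ∃ x ∈ D, EFormula.Sat D (Function.update v i x) φ

/-- All variables occurring in the formula are `< m`. -/
def EFormula.VarsLt (m : ℕ) : EFormula → Prop
  | .mem i j => i < m ∧ j < m
  | .eq i j => i < m ∧ j < m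
  | .not φ => EFormula.VarsLt m φ
  | .or φ ψ => EFormula.VarsLt m φ ∧ EFormula.VarsLt m ψ
  | .ex i φ => i < m ∧ EFormula.VarsLt m φ

/-- First-order formulas of the two-sorted language of `GB⁻`: set variables indexed by `ℕ`,
class parameters indexed by `ℕ`, and only set quantifiers. -/
inductive GBFormula : Type
  | mem : ℕ → ℕ → GBFormula
  | eq : ℕ → ℕ → GBFormula
  | cls : ℕ → ℕ → GBFormula    -- `vᵢ ∈ C_j`
  | not : GBFormula → GBFormula
  | or : GBFormula → GBFormula → GBFormula
  | ex : ℕ → GBFormula → GBFormula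

/-- Satisfaction of a `GBFormula` with set quantifiers ranging over `Mset`,
class parameters `Cs` and set assignment `v`. -/
def GBFormula.Sat (Mset : Set ZFSet) (Cs : ℕ → Set ZFSet) (v : ℕ → ZFSet) : GBFormula → Prop
  | .mem i j => v i ∈ v j
  | .eq i j => v i = v j
  | .cls i j => v i ∈ Cs j
  | .not φ => ¬ GBFormula.Sat Mset Cs v φ
  | .or φ ψ => GBFormula.Sat Mset Cs v φ ∨ GBFormula.Sat Mset Cs v ψ
  | .ex i φ => ∃ x ∈ Mset, GBFormula.Sat Mset Cs (Function.update v i x) φ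

/-! ### Countable transitive models of GB⁻ -/

/-- A countable transitive second-order model `𝕄 = ⟨M, 𝒞⟩` of `GB⁻`:
`M` is transitive and countable, classes are subsets of `M`, sets are classes, and the axioms
of `GB⁻` hold (extensionality and foundation are automatic for `ZFSet`; the set axioms of `ZF⁻`
with separation and collection allowing class parameters, together with first-order class
comprehension, are listed). -/
structure GBModel.{u_1} where
  M : Set ZFSet.{u_1}
  Cls : Set (Set ZFSet)
  countable_M : M.Countable
  countable_Cls : Cls.Countable
  transitive : ∀ x ∈ M, ∀ y : ZFSet, y ∈ x → y ∈ M
  sets_are_classes : ∀ x ∈ M, x.toSet ∈ Cls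
  classes_sub : ∀ C ∈ Cls, C ⊆ M
  empty_mem : (∅ : ZFSet) ∈ M
  pair_mem : ∀ x ∈ M, ∀ y ∈ M, ({x, y} : ZFSet) ∈ M
  sUnion_mem : ∀ x ∈ M, (⋃₀ x : ZFSet) ∈ M
  omega_mem : ZFSet.omega ∈ M
  comprehension : ∀ (φ : GBFormula) (v : ℕ → ZFSet) (Cs : ℕ → Set ZFSet),
    (∀ n, v n ∈ M) → (∀ n, Cs n ∈ Cls) →
    {x : ZFSet | x ∈ M ∧ GBFormula.Sat M Cs (Function.update v 0 x) φ} ∈ Cls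
  separation : ∀ C ∈ Cls, ∀ a ∈ M, ∃ b ∈ M, ∀ x : ZFSet, x ∈ b ↔ x ∈ a ∧ x ∈ C
  collection : ∀ C ∈ Cls, ∀ a ∈ M,
    (∀ x : ZFSet, x ∈ a → ∃ y ∈ M, x.pair y ∈ C) →
    ∃ b ∈ M, ∀ x : ZFSet, x ∈ a → ∃ y : ZFSet, y ∈ b ∧ x.pair y ∈ C

/-- A notion of class forcing `ℙ = ⟨P, ≤_ℙ⟩` for `𝕄`: a partial order (with maximal element
`𝟙_ℙ`) whose domain and order relation are classes of `𝕄`. -/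
structure ClassForcing (𝕄 : GBModel) where
  P : Set ZFSet
  le : ZFSet → ZFSet → Prop
  one : ZFSet
  one_mem : one ∈ P
  le_one : ∀ p ∈ P, le p one
  le_refl : ∀ p ∈ P, le p p
  le_trans : ∀ p q r : ZFSet, le p q → le q r → le p r
  P_cls : P ∈ 𝕄.Cls
  le_cls : {x : ZFSet | ∃ p ∈ P, ∃ q ∈ P, le p q ∧ x = p.pair q} ∈ 𝕄.Cls

/-! ### Names and their evaluation -/

/-- Auxiliary rank-bounded version of `IsName`. -/
def IsNameAux (S : Set ZFSet) (o : Ordinal) (σ : ZFSet) : Prop :=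
  ∀ x ∈ σ.toSet, ∃ τ p : ZFSet, x = τ.pair p ∧ p ∈ S ∧
    ∃ _h : τ.rank < o, IsNameAux S τ.rank τ
termination_by o

/-- `σ` is a `ℙ`-name (for the forcing with conditions `S`): every element of `σ` is a pair
`⟨τ, p⟩` with `τ` a `ℙ`-name and `p ∈ S`. -/
def IsName (S : Set ZFSet) (σ : ZFSet) : Prop := IsNameAux S σ.rank σ

/-- Image of a ZFSet under an arbitrary function (using choice for definability). -/
def zimage (f : ZFSet → ZFSet) (x : ZFSet) : ZFSet :=
  @ZFSet.image f (Classical.allZFSetDefinable _) x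

/-- Auxiliary rank-bounded version of the evaluation `σ^G` of a name by a filter. -/
def nameEvalAux (G : Set ZFSet) (o : Ordinal) (σ : ZFSet) : ZFSet :=
  zimage (fun τ => if h : τ.rank < o then nameEvalAux G τ.rank τ else ∅)
    (ZFSet.sep (fun τ => ∃ p, p ∈ G ∧ τ.pair p ∈ σ) (⋃₀ ⋃₀ σ))
termination_by o
decreasing_by exact h

/-- The evaluation `σ^G = {τ^G | ∃ p ∈ G, ⟨τ, p⟩ ∈ σ}` of a name `σ` by a filter `G`. -/
def nameEval (G : Set ZFSet) (σ : ZFSet) : ZFSet := nameEvalAux G σ.rank σ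

/-- Auxiliary rank-bounded version of `nameTC`. -/
def nameTCAux (o : Ordinal) (σ : ZFSet) : Set ZFSet :=
  {x | ∃ τ p : ZFSet, τ.pair p ∈ σ ∧ (x = p ∨ ∃ _h : τ.rank < o, x ∈ nameTCAux τ.rank τ)}
termination_by o

/-- The set `tc(σ) = ⋃ {{p} ∪ tc(τ) | ⟨τ,p⟩ ∈ σ}` of conditions appearing in the transitive
closure of the name `σ`. -/
def nameTC (σ : ZFSet) : Set ZFSet := nameTCAux σ.rank σ

/-! ### Filters, genericity, generic extensions -/

/-- `G` is a filter on the partial order with domain `S` and ordering `le`. -/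
def IsFilterOn (S : Set ZFSet) (le : ZFSet → ZFSet → Prop) (G : Set ZFSet) : Prop :=
  G ⊆ S ∧ G.Nonempty ∧ (∀ p ∈ G, ∀ q ∈ S, le p q → q ∈ G) ∧
    ∀ p ∈ G, ∀ q ∈ G, ∃ r ∈ G, le r p ∧ le r q

/-- `D` is a dense subclass of the partial order `⟨S, le⟩`. -/
def DenseIn (S : Set ZFSet) (le : ZFSet → ZFSet → Prop) (D : Set ZFSet) : Prop :=
  D ⊆ S ∧ ∀ p ∈ S, ∃ q ∈ D, le q p

/-- `G` is a generic filter on `⟨S, le⟩` over `𝕄`: a filter meeting every dense subclass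
of `⟨S, le⟩` lying in `𝒞`. -/
def IsGeneric (𝕄 : GBModel) (S : Set ZFSet) (le : ZFSet → ZFSet → Prop) (G : Set ZFSet) : Prop :=
  IsFilterOn S le G ∧ ∀ D ∈ 𝕄.Cls, DenseIn S le D → (G ∩ D).Nonempty

/-- The generic extension `M[G] = {σ^G | σ ∈ M a name for the forcing with domain S}`. -/
def MGen (𝕄 : GBModel) (S : Set ZFSet) (G : Set ZFSet) : Set ZFSet :=
  {x | ∃ σ : ZFSet, σ ∈ 𝕄.M ∧ IsName S σ ∧ nameEval G σ = x}

/-! ### Compatibility, the set decision property -/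

/-- `p` and `q` are compatible in `⟨S, le⟩`. -/
def Compat (S : Set ZFSet) (le : ZFSet → ZFSet → Prop) (p q : ZFSet) : Prop :=
  ∃ r ∈ S, le r p ∧ le r q

/-- `p ≤* q` : every extension of `p` is compatible with `q`. -/
def leStar (S : Set ZFSet) (le : ZFSet → ZFSet → Prop) (p q : ZFSet) : Prop :=
  ∀ r ∈ S, le r p → Compat S le r q

/-- `p` decides the set of conditions `A`: for every `a ∈ A`, either `p ≤* a` or `p ⊥ a`. -/
def Decides (S : Set ZFSet) (le : ZFSet → ZFSet → Prop) (p A : ZFSet) : Prop :=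
  ∀ a : ZFSet, a ∈ A → leStar S le p a ∨ ¬ Compat S le p a

/-- The set decision property: every set of conditions in `M` is decided densely. -/
def SetDecisionProperty (𝕄 : GBModel) (F : ClassForcing 𝕄) : Prop :=
  ∀ p ∈ F.P, ∀ A : ZFSet, A ∈ 𝕄.M → (∀ a : ZFSet, a ∈ A → a ∈ F.P) →
    ∃ q ∈ F.P, F.le q p ∧ Decides F.P F.le q A

/-! ### The forcing theorem -/

/-- Encode a finite list of sets as a single set by iterated Kuratowski pairing. -/
def listEncode : List ZFSet → ZFSet
  | [] => ∅
  | a :: l => a.pair (listEncode l)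

/-- The assignment sending variable `n < m` to `σₙ^G` (and `∅` beyond `m`). -/
def namesAssign (G : Set ZFSet) (m : ℕ) (σs : Fin m → ZFSet) : ℕ → ZFSet :=
  fun n => if h : n < m then nameEval G (σs ⟨n, h⟩) else ∅

/-- `p ⊩_ℙ φ(σ₀, …, σ_{m-1})` : for every generic `G ∋ p`, `M[G] ⊨ φ(σ₀^G, …, σ_{m-1}^G)`. -/
def Forces (𝕄 : GBModel) (F : ClassForcing 𝕄) (φ : EFormula) (m : ℕ) (p : ZFSet)
    (σs : Fin m → ZFSet) : Prop :=
  ∀ G : Set ZFSet, IsGeneric 𝕄 F.P F.le G → p ∈ G →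
    EFormula.Sat (MGen 𝕄 F.P G) (namesAssign G m σs) φ

/-- `ℙ` satisfies the forcing theorem over `𝕄`: for every `∈`-formula `φ(v₀,…,v_{m-1})`,
the forcing relation is a class of `𝕄` (definability lemma) and everything true in a generic
extension is forced by a condition in the generic filter (truth lemma). -/
def SatisfiesForcingTheorem (𝕄 : GBModel) (F : ClassForcing 𝕄) : Prop :=
  ∀ (φ : EFormula) (m : ℕ), EFormula.VarsLt m φ →
    ({x : ZFSet | ∃ p ∈ F.P, ∃ σs : Fin m → ZFSet,
        (∀ i, σs i ∈ 𝕄.M ∧ IsName F.P (σs i)) ∧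
        Forces 𝕄 F φ m p σs ∧
        x = p.pair (listEncode (List.ofFn σs))} ∈ 𝕄.Cls) ∧
    ∀ σs : Fin m → ZFSet, (∀ i, σs i ∈ 𝕄.M ∧ IsName F.P (σs i)) →
      ∀ G : Set ZFSet, IsGeneric 𝕄 F.P F.le G →
        EFormula.Sat (MGen 𝕄 F.P G) (namesAssign G m σs) φ →
        ∃ p ∈ G, Forces 𝕄 F φ m p σs

/-! ### Complete subforcings, the set reduction property -/

/-- `A` is an antichain of the partial order `⟨S, le⟩`. -/
def IsAntichainIn (S : Set ZFSet) (le : ZFSet → ZFSet → Prop) (A : Set ZFSet) : Prop :=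
  A ⊆ S ∧ ∀ p ∈ A, ∀ q ∈ A, p ≠ q → ¬ Compat S le p q

/-- `A` is a maximal antichain of the partial order `⟨S, le⟩`. -/
def IsMaxAntichainIn (S : Set ZFSet) (le : ZFSet → ZFSet → Prop) (A : Set ZFSet) : Prop :=
  IsAntichainIn S le A ∧ ∀ p ∈ S, ∃ a ∈ A, Compat S le p a

/-- `ℚ ⊲∘ ℙ` : `Q` is a set-sized complete subforcing of `ℙ` (with the induced ordering):
`Q ∈ M`, `Q ⊆ P`, `𝟙 ∈ Q`, and every maximal antichain of `ℚ` in `M` is predense in `ℙ`. -/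
def IsCompleteSub (𝕄 : GBModel) (F : ClassForcing 𝕄) (Q : ZFSet) : Prop :=
  Q ∈ 𝕄.M ∧ Q.toSet ⊆ F.P ∧ F.one ∈ Q ∧
    ∀ A : ZFSet, A ∈ 𝕄.M → A.toSet ⊆ Q.toSet → IsMaxAntichainIn Q.toSet F.le A.toSet →
      ∀ p ∈ F.P, ∃ a : ZFSet, a ∈ A ∧ Compat F.P F.le p a

/-- `ℚ^{∥q}` : the conditions of `Q` compatible with `q` in `ℙ`. -/
def QPar (𝕄 : GBModel) (F : ClassForcing 𝕄) (Q : ZFSet) (q : ZFSet) : Set ZFSet :=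
  {r | r ∈ Q ∧ Compat F.P F.le r q}

/-- The property `(*)(A, q, ℚ)`: for every `a ∈ A`, the set of `r ∈ ℚ^{∥q}` such that either
all `s ≤ q, r` satisfy `s ≤* a`, or all `s ≤ q, r` satisfy `s ⊥ a`, is dense in `ℚ^{∥q}`. -/
def StarProp (𝕄 : GBModel) (F : ClassForcing 𝕄) (A q Q : ZFSet) : Prop :=
  ∀ a : ZFSet, a ∈ A → ∀ r₀ ∈ QPar 𝕄 F Q q, ∃ r₁ ∈ QPar 𝕄 F Q q, F.le r₁ r₀ ∧
    ((∀ s ∈ F.P, F.le s q → F.le s r₁ → leStar F.P F.le s a) ∨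
      (∀ s ∈ F.P, F.le s q → F.le s r₁ → ¬ Compat F.P F.le s a))

/-- The set reduction property. -/
def SetReductionProperty (𝕄 : GBModel) (F : ClassForcing 𝕄) : Prop :=
  ∀ A : ZFSet, A ∈ 𝕄.M → (∀ a : ZFSet, a ∈ A → a ∈ F.P) →
    ∀ p ∈ F.P, ∃ q ∈ F.P, F.le q p ∧ ∃ Q : ZFSet, IsCompleteSub 𝕄 F Q ∧ StarProp 𝕄 F A q Q

/-- Every new set added by `ℙ` is added by a set-sized complete subforcing of `ℙ`. -/
def EveryNewSetBySub (𝕄 : GBModel) (F : ClassForcing 𝕄) : Prop :=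
  ∀ G : Set ZFSet, IsGeneric 𝕄 F.P F.le G →
    ∀ x : ZFSet, x ∈ MGen 𝕄 F.P G → x ∉ 𝕄.M →
      ∃ Q : ZFSet, IsCompleteSub 𝕄 F Q ∧ x ∈ MGen 𝕄 Q.toSet (G ∩ Q.toSet)

/-! ### The q-reduction of a name -/

/-- First component of a Kuratowski pair (junk value `∅` otherwise). -/
def fstZ (x : ZFSet) : ZFSet :=
  if h : ∃ a b : ZFSet, x = a.pair b then h.choose else ∅

/-- Second component of a Kuratowski pair (junk value `∅` otherwise). -/
def sndZ (x : ZFSet) : ZFSet :=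
  if h : ∃ a b : ZFSet, x = a.pair b then h.choose_spec.choose else ∅

/-- Cartesian product of two `ZFSet`s. -/
def zprod (a b : ZFSet) : ZFSet :=
  ZFSet.sep (fun x => ∃ u v : ZFSet, u ∈ a ∧ v ∈ b ∧ x = u.pair v)
    (ZFSet.powerset (ZFSet.powerset (a ∪ b)))

/-- Auxiliary rank-bounded version of the `q`-reduction of a name to `Q`. -/
def reduceAux (S : Set ZFSet) (le : ZFSet → ZFSet → Prop) (Q q : ZFSet) (o : Ordinal)
    (σ : ZFSet) : ZFSet :=
  zimage
    (fun x =>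
      (if h : (fstZ x).rank < o then reduceAux S le Q q (fstZ x).rank (fstZ x) else ∅).pair
        (sndZ x))
    (ZFSet.sep
      (fun x => ∃ τ r : ZFSet, x = τ.pair r ∧ r ∈ Q ∧
        ∃ a : ZFSet, τ.pair a ∈ σ ∧ ∀ s ∈ S, le s q → le s r → leStar S le s a)
      (zprod (⋃₀ ⋃₀ σ) Q))
termination_by o
decreasing_by exact h

/-- The `q`-reduction `σ_q^ℚ = {⟨τ_q^ℚ, r⟩ | r ∈ ℚ ∧ ∃a (⟨τ,a⟩ ∈ σ ∧ ∀ s ≤ q,r (s ≤* a))}`. -/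
def reduceName (S : Set ZFSet) (le : ZFSet → ZFSet → Prop) (Q q σ : ZFSet) : ZFSet :=
  reduceAux S le Q q σ.rank σ

/-! ### Projections -/

/-- `f` is a projection from `⟨S, le⟩` (with maximum `one`) onto the subforcing with domain
`Qs`, respecting `X`. -/
def IsProjectionResp (S : Set ZFSet) (le : ZFSet → ZFSet → Prop) (one : ZFSet)
    (Qs X : Set ZFSet) (f : ZFSet → ZFSet) : Prop :=
  (∀ p ∈ S, f p ∈ Qs) ∧
  f one = one ∧
  (∀ p ∈ S, ∀ q ∈ S, le p q → le (f p) (f q)) ∧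
  (∀ p ∈ S, ∀ q ∈ Qs, le q (f p) → ∃ r ∈ S, le r p ∧ le (f r) q) ∧
  (∀ p ∈ X, ∀ q ∈ S, le (f q) p → le q p) ∧
  (∀ p ∈ X, f p = p)

/-- `ℙ` is approachable by projections: there is a class `Π ∈ 𝒞` whose sections `π_{X,y}`
are such that for every set `X ⊆ ℙ` there are a set `y` and a set-sized subforcing `ℚ ⊇ X ∪ {𝟙}`
of `ℙ` with `π_{X,y} : ℙ → ℚ` a projection respecting `X`. -/
def ApproachableByProjections (𝕄 : GBModel) (F : ClassForcing 𝕄) : Prop :=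
  ∃ Pi ∈ 𝕄.Cls, ∀ X : ZFSet, X ∈ 𝕄.M → (∀ x : ZFSet, x ∈ X → x ∈ F.P) →
    ∃ y ∈ 𝕄.M, ∃ Q : ZFSet, Q ∈ 𝕄.M ∧ Q.toSet ⊆ F.P ∧ (∀ x : ZFSet, x ∈ X → x ∈ Q) ∧
      F.one ∈ Q ∧ ∃ f : ZFSet → ZFSet,
        (∀ u ∈ F.P, ∀ v : ZFSet, (f u = v ↔ X.pair (y.pair (u.pair v)) ∈ Pi)) ∧
        IsProjectionResp F.P F.le F.one Q.toSet X.toSet f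

/-- `p ⊩ σ ⊆ τ` for the forcing with domain `S` and ordering `le`. -/
def ForcesSubset (𝕄 : GBModel) (S : Set ZFSet) (le : ZFSet → ZFSet → Prop)
    (p σ τ : ZFSet) : Prop :=
  ∀ G : Set ZFSet, IsGeneric 𝕄 S le G → p ∈ G → nameEval G σ ⊆ nameEval G τ

/-! ### Bounded names, turning proper classes into sets -/

/-- The possible values of the name `σ` in generic extensions. -/
def PossibleValues (𝕄 : GBModel) (S : Set ZFSet) (le : ZFSet → ZFSet → Prop)
    (σ : ZFSet) : Set ZFSet :=
  {x | ∃ G : Set ZFSet, IsGeneric 𝕄 S le G ∧ nameEval G σ = x}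

/-- The name `σ` is bounded: some `A ∈ M` covers all its possible values lying in `M`. -/
def IsBoundedName (𝕄 : GBModel) (F : ClassForcing 𝕄) (σ : ZFSet) : Prop :=
  ∃ A ∈ 𝕄.M, PossibleValues 𝕄 F.P F.le σ ∩ 𝕄.M ⊆ A.toSet

/-- `ℙ` has bounded names: every `ℙ`-name in `M` is bounded. -/
def HasBoundedNames (𝕄 : GBModel) (F : ClassForcing 𝕄) : Prop :=
  ∀ σ : ZFSet, σ ∈ 𝕄.M → IsName F.P σ → IsBoundedName 𝕄 F σ

/-- `X` is a proper class of `𝕄`: a class of `𝕄` that is not (the extension of) a set of `𝕄`. -/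
def IsProperClass (𝕄 : GBModel) (X : Set ZFSet) : Prop :=
  X ∈ 𝕄.Cls ∧ ¬ ∃ x ∈ 𝕄.M, x.toSet = X

/-- The proper class `X` of `𝕄` is turned into a set by forcing with `ℙ`: some `ℙ`-name in `M`
evaluates to `X` under some generic filter. -/
def TurnsIntoSet (𝕄 : GBModel) (F : ClassForcing 𝕄) (X : Set ZFSet) : Prop :=
  ∃ σ : ZFSet, σ ∈ 𝕄.M ∧ IsName F.P σ ∧
    ∃ G : Set ZFSet, IsGeneric 𝕄 F.P F.le G ∧ (nameEval G σ).toSet = X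

/-! ### Functions and partial functions as sets, collapse forcings -/

/-- `p` is a partial function from (a subset of) `γ` into the class `Y`. -/
def IsPFunOn (p γ : ZFSet) (Y : Set ZFSet) : Prop :=
  (∀ x : ZFSet, x ∈ p → ∃ a b : ZFSet, x = a.pair b ∧ a ∈ γ ∧ b ∈ Y) ∧
  ∀ a b b' : ZFSet, a.pair b ∈ p → a.pair b' ∈ p → b = b'

/-- The domain of a set of pairs. -/
def pdom (p : ZFSet) : Set ZFSet := {a | ∃ b : ZFSet, a.pair b ∈ p}

/-- `f` is (the graph of) an injective function from `X` into `Y`. -/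
def ZInjFun (f : ZFSet) (X Y : Set ZFSet) : Prop :=
  (∀ x : ZFSet, x ∈ f → ∃ a b : ZFSet, x = a.pair b ∧ a ∈ X ∧ b ∈ Y) ∧
  (∀ a b b' : ZFSet, a.pair b ∈ f → a.pair b' ∈ f → b = b') ∧
  (∀ a ∈ X, ∃ b : ZFSet, a.pair b ∈ f) ∧
  (∀ a a' b : ZFSet, a.pair b ∈ f → a'.pair b ∈ f → a = a')

/-- `D` has size less than the cardinality of `γ` in the sense of `M`:
no function of `M` injects `γ` into `D`. -/
def SmallerThan (𝕄 : GBModel) (γ : ZFSet) (D : Set ZFSet) : Prop :=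
  ¬ ∃ f ∈ 𝕄.M, ZInjFun f γ.toSet D

/-- Conditions of `Col(γ, Y)^M`: partial functions of `M` from `γ` to `Y` whose domain has
size less than the cardinality of `γ` in `M`. -/
def ColCond (𝕄 : GBModel) (γ : ZFSet) (Y : Set ZFSet) (p : ZFSet) : Prop :=
  p ∈ 𝕄.M ∧ IsPFunOn p γ Y ∧ SmallerThan 𝕄 γ (pdom p)

/-- Conditions of `Col₋*(γ, Y)^M`: those conditions of `Col(γ, Y)^M` whose domain is
an ordinal. -/
def ColStarCond (𝕄 : GBModel) (γ : ZFSet) (Y : Set ZFSet) (p : ZFSet) : Prop :=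
  ColCond 𝕄 γ Y p ∧ ∃ β : ZFSet, β.IsOrdinal ∧ pdom p = β.toSet

/-- `f` is (the graph of) a function with domain `I`. -/
def ZFuncOn (f I : ZFSet) : Prop :=
  (∀ x : ZFSet, x ∈ f → ∃ a b : ZFSet, x = a.pair b ∧ a ∈ I) ∧
  (∀ a b b' : ZFSet, a.pair b ∈ f → a.pair b' ∈ f → b = b') ∧
  (∀ a : ZFSet, a ∈ I → ∃ b : ZFSet, a.pair b ∈ f)

/-- Application of a set-function to an argument (junk value `∅` if undefined). -/
def zapp (f i : ZFSet) : ZFSet :=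
  if h : ∃ b : ZFSet, i.pair b ∈ f then h.choose else ∅

/-! ### Pretameness -/

/-- `ℙ` is pretame for `𝕄`: for every `p ∈ ℙ`, `I ∈ M` and every `𝒞`-coded sequence
`⟨D_i | i ∈ I⟩` (coded as the class of pairs `⟨i, x⟩` with `x ∈ D_i`) of dense subclasses
of `ℙ`, there are `q ≤ p` and `⟨d_i | i ∈ I⟩ ∈ M` with `d_i ⊆ D_i` predense below `q`. -/
def Pretame (𝕄 : GBModel) (F : ClassForcing 𝕄) : Prop :=
  ∀ p ∈ F.P, ∀ I : ZFSet, I ∈ 𝕄.M → ∀ D ∈ 𝕄.Cls,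
    (∀ i : ZFSet, i ∈ I →
      (∀ x : ZFSet, i.pair x ∈ D → x ∈ F.P) ∧ ∀ r ∈ F.P, ∃ s : ZFSet, i.pair s ∈ D ∧ F.le s r) →
    ∃ q ∈ F.P, F.le q p ∧ ∃ d ∈ 𝕄.M, ZFuncOn d I ∧
      ∀ i : ZFSet, i ∈ I → (∀ x : ZFSet, x ∈ zapp d i → i.pair x ∈ D) ∧
        ∀ r ∈ F.P, F.le r q → ∃ a : ZFSet, a ∈ zapp d i ∧ Compat F.P F.le r a

/-! ### The specific forcings of Sections 6 and 7 -/

/-- Conditions of Definition 6.8: (not necessarily finite) partial functions from `ω` to `2`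
lying in `M`. -/
def PCond (𝕄 : GBModel) (p : ZFSet) : Prop :=
  p ∈ 𝕄.M ∧ IsPFunOn p ZFSet.omega {x : ZFSet | x = ∅ ∨ x = ({∅} : ZFSet)}

/-- Conditions of the finite support product `ℚ` of `ω` many copies of `ℙ`:
finite sequences `⟨p₀, …, p_k⟩` of `ℙ`-conditions. -/
def QCond (𝕄 : GBModel) (s : ZFSet) : Prop :=
  s ∈ 𝕄.M ∧ ∃ n : ZFSet, n ∈ ZFSet.omega ∧ ZFuncOn s n ∧
    ∀ i : ZFSet, i ∈ n → PCond 𝕄 (zapp s i)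

/-- The coordinatewise ordering on `ℚ`. -/
def QLe (s' s : ZFSet) : Prop :=
  pdom s ⊆ pdom s' ∧ ∀ i ∈ pdom s, zapp s i ⊆ zapp s' i

/-- The power class `𝒫(ω)^M`. -/
def PowOmega (𝕄 : GBModel) : Set ZFSet :=
  {x : ZFSet | x ∈ 𝕄.M ∧ x ⊆ ZFSet.omega}

/-- `X ⊆ M` is definable over `⟨M, ∈⟩` (from set parameters). -/
def DefinableOver (Mset : Set ZFSet) (X : Set ZFSet) : Prop :=
  ∃ (φ : EFormula) (v : ℕ → ZFSet), (∀ n, v n ∈ Mset) ∧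
    X = {x : ZFSet | x ∈ Mset ∧ EFormula.Sat Mset (Function.update v 0 x) φ}

/-- Every set of `M` is countable in `M`: it injects into `ω` by a function of `M`. -/
def AllSetsCountable (𝕄 : GBModel) : Prop :=
  ∀ x ∈ 𝕄.M, ∃ f ∈ 𝕄.M, ZInjFun f x.toSet ZFSet.omega.toSet


/-! ### Definability calculus -/

/-- `R` is first-order definable over `𝕄` with class parameters `Cs`. -/
def Dfb (𝕄 : GBModel) (Cs : ℕ → Set ZFSet) (R : (ℕ → ZFSet) → Prop) : Prop :=
  ∃ φ : GBFormula, ∀ v : ℕ → ZFSet, (∀ n, v n ∈ 𝕄.M) → (GBFormula.Sat 𝕄.M Cs v φ ↔ R v)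

section Dfb
variable {𝕄 : GBModel} {Cs : ℕ → Set ZFSet} {R S : (ℕ → ZFSet) → Prop}

theorem upd_mem {v : ℕ → ZFSet} (hv : ∀ n, v n ∈ 𝕄.M) {x : ZFSet} (hx : x ∈ 𝕄.M) (i : ℕ) :
    ∀ n, Function.update v i x n ∈ 𝕄.M := by
  intro n
  by_cases h : n = i
  · subst h; simpa using hx
  · simpa [Function.update, h] using hv n

theorem Dfb.congr (h : Dfb 𝕄 Cs R) (e : ∀ v, (∀ n, v n ∈ 𝕄.M) → (R v ↔ S v)) : Dfb 𝕄 Cs S := by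
  obtain ⟨φ, hφ⟩ := h
  exact ⟨φ, fun v hv => (hφ v hv).trans (e v hv)⟩

theorem Dfb.mem (i j : ℕ) : Dfb 𝕄 Cs (fun v => v i ∈ v j) := ⟨.mem i j, fun _ _ => Iff.rfl⟩
theorem Dfb.eq (i j : ℕ) : Dfb 𝕄 Cs (fun v => v i = v j) := ⟨.eq i j, fun _ _ => Iff.rfl⟩
theorem Dfb.cls (i j : ℕ) : Dfb 𝕄 Cs (fun v => v i ∈ Cs j) := ⟨.cls i j, fun _ _ => Iff.rfl⟩

theorem Dfb.not (h : Dfb 𝕄 Cs R) : Dfb 𝕄 Cs (fun v => ¬ R v) := by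
  obtain ⟨φ, hφ⟩ := h
  exact ⟨.not φ, fun v hv => not_congr (hφ v hv)⟩

theorem Dfb.or (h : Dfb 𝕄 Cs R) (h' : Dfb 𝕄 Cs S) : Dfb 𝕄 Cs (fun v => R v ∨ S v) := by
  obtain ⟨φ, hφ⟩ := h
  obtain ⟨ψ, hψ⟩ := h'
  exact ⟨.or φ ψ, fun v hv => or_congr (hφ v hv) (hψ v hv)⟩

theorem Dfb.and (h : Dfb 𝕄 Cs R) (h' : Dfb 𝕄 Cs S) : Dfb 𝕄 Cs (fun v => R v ∧ S v) :=
  (Dfb.not (Dfb.or h.not h'.not)).congr fun v _ => by tauto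

theorem Dfb.imp (h : Dfb 𝕄 Cs R) (h' : Dfb 𝕄 Cs S) : Dfb 𝕄 Cs (fun v => R v → S v) :=
  (Dfb.or h.not h').congr fun v _ => by tauto

theorem Dfb.iff (h : Dfb 𝕄 Cs R) (h' : Dfb 𝕄 Cs S) : Dfb 𝕄 Cs (fun v => R v ↔ S v) :=
  (Dfb.and (Dfb.imp h h') (Dfb.imp h' h)).congr fun v _ => by tauto

theorem Dfb.ex (i : ℕ) (h : Dfb 𝕄 Cs R) :
    Dfb 𝕄 Cs (fun v => ∃ x ∈ 𝕄.M, R (Function.update v i x)) := by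
  obtain ⟨φ, hφ⟩ := h
  exact ⟨.ex i φ, fun v hv => exists_congr fun x => and_congr_right fun hx =>
    hφ _ (upd_mem hv hx i)⟩

theorem Dfb.all (i : ℕ) (h : Dfb 𝕄 Cs R) :
    Dfb 𝕄 Cs (fun v => ∀ x ∈ 𝕄.M, R (Function.update v i x)) :=
  (Dfb.not (Dfb.ex i h.not)).congr fun v _ => by push Not; rfl

/-- `v k = {v i, v j}`. -/
theorem Dfb.upair (k i j : ℕ) : Dfb 𝕄 Cs (fun v => v k = {v i, v j}) := by
  have h := Dfb.all (𝕄 := 𝕄) (Cs := Cs) (i + j + k + 1) (Dfb.iff (Dfb.mem (i + j + k + 1) k)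
    (Dfb.or (Dfb.eq (i + j + k + 1) i) (Dfb.eq (i + j + k + 1) j)))
  refine h.congr fun v hv => ?_
  have e1 : i ≠ i + j + k + 1 := by omega
  have e2 : j ≠ i + j + k + 1 := by omega
  have e3 : k ≠ i + j + k + 1 := by omega
  simp only [Function.update_self, Function.update_of_ne e1, Function.update_of_ne e2,
    Function.update_of_ne e3]
  constructor
  · intro H
    ext z
    rw [ZFSet.mem_pair]
    constructor
    · intro hz
      exact (H z (𝕄.transitive _ (hv k) z hz)).1 hz
    · rintro (rfl | rfl)
      · exact (H _ (hv i)).2 (Or.inl rfl)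
      · exact (H _ (hv j)).2 (Or.inr rfl)
  · intro H x _
    rw [H, ZFSet.mem_pair]

theorem pair_eq' (x y : ZFSet) : ZFSet.pair x y = {({x, x} : ZFSet), {x, y}} := by
  have : ({x, x} : ZFSet) = {x} := by
    ext z; simp
  rw [this]; rfl

theorem pairM {x y : ZFSet} (hx : x ∈ 𝕄.M) (hy : y ∈ 𝕄.M) : ZFSet.pair x y ∈ 𝕄.M := by
  rw [pair_eq']
  exact 𝕄.pair_mem _ (𝕄.pair_mem _ hx _ hx) _ (𝕄.pair_mem _ hx _ hy)

theorem pairM_inv {x y : ZFSet} (h : ZFSet.pair x y ∈ 𝕄.M) : x ∈ 𝕄.M ∧ y ∈ 𝕄.M := by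
  rw [pair_eq'] at h
  have h1 : ({x, y} : ZFSet) ∈ 𝕄.M := 𝕄.transitive _ h _ (by simp)
  exact ⟨𝕄.transitive _ h1 _ (by simp), 𝕄.transitive _ h1 _ (by simp)⟩

/-- `v k = ⟨v i, v j⟩`. -/
theorem Dfb.pairEq (k i j : ℕ) : Dfb 𝕄 Cs (fun v => v k = (v i).pair (v j)) := by
  have h := Dfb.ex (𝕄 := 𝕄) (Cs := Cs) (i + j + k + 1) (Dfb.ex (i + j + k + 2)
    (Dfb.and (Dfb.upair (i + j + k + 1) i i) (Dfb.and (Dfb.upair (i + j + k + 2) i j)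
      (Dfb.upair k (i + j + k + 1) (i + j + k + 2)))))
  refine h.congr fun v hv => ?_
  have e1 : i ≠ i + j + k + 1 := by omega
  have e2 : j ≠ i + j + k + 1 := by omega
  have e3 : k ≠ i + j + k + 1 := by omega
  have f1 : i ≠ i + j + k + 2 := by omega
  have f2 : j ≠ i + j + k + 2 := by omega
  have f3 : k ≠ i + j + k + 2 := by omega
  have f4 : i + j + k + 1 ≠ i + j + k + 2 := by omega
  simp only [Function.update_self, Function.update_of_ne e1, Function.update_of_ne e2,
    Function.update_of_ne e3, Function.update_of_ne f1, Function.update_of_ne f2,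
    Function.update_of_ne f3, Function.update_of_ne f4]
  rw [pair_eq']
  constructor
  · rintro ⟨x, _, y, _, rfl, rfl, h⟩
    exact h
  · intro h
    exact ⟨_, 𝕄.pair_mem _ (hv i) _ (hv i), _, 𝕄.pair_mem _ (hv i) _ (hv j), rfl, rfl, h⟩

/-- `⟨v i, v j⟩ ∈ v k`. -/
theorem Dfb.pairMem (i j k : ℕ) : Dfb 𝕄 Cs (fun v => (v i).pair (v j) ∈ v k) := by
  have h := Dfb.ex (𝕄 := 𝕄) (Cs := Cs) (i + j + k + 1)
    (Dfb.and (Dfb.pairEq (i + j + k + 1) i j) (Dfb.mem (i + j + k + 1) k))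
  refine h.congr fun v hv => ?_
  have e1 : i ≠ i + j + k + 1 := by omega
  have e2 : j ≠ i + j + k + 1 := by omega
  have e3 : k ≠ i + j + k + 1 := by omega
  simp only [Function.update_self, Function.update_of_ne e1, Function.update_of_ne e2,
    Function.update_of_ne e3]
  constructor
  · rintro ⟨x, _, rfl, h⟩
    exact h
  · intro h
    exact ⟨_, pairM (hv i) (hv j), rfl, h⟩

/-- `⟨v i, v j⟩ ∈ C_k`. -/
theorem Dfb.pairCls (i j k : ℕ) : Dfb 𝕄 Cs (fun v => (v i).pair (v j) ∈ Cs k) := by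
  have h := Dfb.ex (𝕄 := 𝕄) (Cs := Cs) (i + j + 1)
    (Dfb.and (Dfb.pairEq (i + j + 1) i j) (Dfb.cls (i + j + 1) k))
  refine h.congr fun v hv => ?_
  have e1 : i ≠ i + j + 1 := by omega
  have e2 : j ≠ i + j + 1 := by omega
  simp only [Function.update_self, Function.update_of_ne e1, Function.update_of_ne e2]
  constructor
  · rintro ⟨x, _, rfl, h⟩
    exact h
  · intro h
    exact ⟨_, pairM (hv i) (hv j), rfl, h⟩

/-- Comprehension, with two set parameters `a` (variable 1) and `b` (variable 2). -/
theorem Dfb.toCls (h : Dfb 𝕄 Cs R) (hC : ∀ n, Cs n ∈ 𝕄.Cls) {a b : ZFSet} (ha : a ∈ 𝕄.M)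
    (hb : b ∈ 𝕄.M) :
    {x | x ∈ 𝕄.M ∧ R (fun n => if n = 0 then x else if n = 1 then a else b)} ∈ 𝕄.Cls := by
  obtain ⟨φ, hφ⟩ := h
  have hv : ∀ n : ℕ, (if n = 1 then a else b) ∈ 𝕄.M := by intro n; split_ifs <;> assumption
  have := 𝕄.comprehension φ (fun n => if n = 1 then a else b) Cs hv hC
  convert this using 1
  ext x
  refine and_congr_right fun hx => ?_
  rw [hφ _ (upd_mem hv hx 0)]
  have : (fun n => if n = 0 then x else if n = 1 then a else b) =
    Function.update (fun n : ℕ => if n = 1 then a else b) 0 x := by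
    ext1 n
    simp [Function.update]
  rw [this]

end Dfb

theorem empty_cls (𝕄 : GBModel) : (∅ : ZFSet).toSet ∈ 𝕄.Cls := 𝕄.sets_are_classes _ 𝕄.empty_mem

/-- Collection plus separation: a set of values of a class relation. -/
theorem imageSet (𝕄 : GBModel) {C : Set ZFSet} (hC : C ∈ 𝕄.Cls) {a : ZFSet} (ha : a ∈ 𝕄.M)
    (h : ∀ x : ZFSet, x ∈ a → ∃ y ∈ 𝕄.M, x.pair y ∈ C) :
    ∃ b ∈ 𝕄.M, (∀ t : ZFSet, t ∈ b → ∃ x : ZFSet, x ∈ a ∧ x.pair t ∈ C) ∧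
      ∀ x : ZFSet, x ∈ a → ∃ t : ZFSet, t ∈ b ∧ x.pair t ∈ C := by
  obtain ⟨b, hb, hb'⟩ := 𝕄.collection C hC a ha h
  have hD := Dfb.toCls (𝕄 := 𝕄) (Cs := fun _ => C) (Dfb.ex 3 (Dfb.and (Dfb.mem 3 1)
    (Dfb.pairCls 3 0 0))) (fun _ => hC) ha ha
  obtain ⟨c, hc, hc'⟩ := 𝕄.separation _ hD b hb
  simp [Function.update] at hc'
  refine ⟨c, hc, ?_, ?_⟩
  · intro t ht
    obtain ⟨_, _, x, _, hx⟩ := (hc' t).1 ht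
    exact ⟨x, hx⟩
  · intro x hx
    obtain ⟨y, hy, hxy⟩ := hb' x hx
    exact ⟨y, (hc' y).2 ⟨hy, 𝕄.transitive _ hb _ hy, x, 𝕄.transitive _ ha _ hx, hx, hxy⟩, hxy⟩

/-- `f` is a partial relation assigning check names to sets. -/
def Bis (one f : ZFSet) : Prop := ∀ u v : ZFSet, u.pair v ∈ f →
  (∀ t : ZFSet, t ∈ v → ∃ w : ZFSet, w ∈ u ∧ ∃ s : ZFSet, t = s.pair one ∧ w.pair s ∈ f) ∧
  (∀ w : ZFSet, w ∈ u → ∃ s : ZFSet, w.pair s ∈ f ∧ s.pair one ∈ v)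

theorem bis_cls (𝕄 : GBModel) {one : ZFSet} (h1 : one ∈ 𝕄.M) :
    {f | f ∈ 𝕄.M ∧ Bis one f} ∈ 𝕄.Cls := by
  have hD := Dfb.toCls (𝕄 := 𝕄) (Cs := fun _ => (∅ : ZFSet).toSet)
    (Dfb.all 3 (Dfb.all 4 (Dfb.imp (Dfb.pairMem 3 4 0) (Dfb.and
      (Dfb.all 5 (Dfb.imp (Dfb.mem 5 4) (Dfb.ex 6 (Dfb.and (Dfb.mem 6 3)
        (Dfb.ex 7 (Dfb.and (Dfb.pairEq 5 7 1) (Dfb.pairMem 6 7 0)))))))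
      (Dfb.all 6 (Dfb.imp (Dfb.mem 6 3) (Dfb.ex 7 (Dfb.and (Dfb.pairMem 6 7 0)
        (Dfb.pairMem 7 1 4)))))))))
    (fun _ => empty_cls 𝕄) h1 h1
  convert hD using 1
  ext f
  refine and_congr_right fun hf => ?_
  simp [Function.update]
  constructor
  · intro H u hu v hv huv
    obtain ⟨H1, H2⟩ := H u v huv
    refine ⟨fun t _ ht => ?_, fun w _ hw => ?_⟩
    · obtain ⟨w, hw, s, hs, hws⟩ := H1 t ht
      have := pairM_inv (𝕄.transitive _ hf _ hws)
      exact ⟨w, this.1, hw, s, this.2, hs, hws⟩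
    · obtain ⟨s, hs, hws⟩ := H2 w hw
      have := pairM_inv (𝕄.transitive _ hf _ hs)
      exact ⟨s, this.2, hs, hws⟩
  · intro H u v huv
    have hm := pairM_inv (𝕄.transitive _ hf _ huv)
    obtain ⟨H1, H2⟩ := H u hm.1 v hm.2 huv
    refine ⟨fun t ht => ?_, fun w hw => ?_⟩
    · obtain ⟨w, _, hw, s, _, hs, hws⟩ := H1 t (𝕄.transitive _ hm.2 _ ht) ht
      exact ⟨w, hw, s, hs, hws⟩
    · obtain ⟨s, _, hs, hws⟩ := H2 w (𝕄.transitive _ hm.1 _ hw) hw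
      exact ⟨s, hs, hws⟩

/-- Comprehension for binary relations: variable 3 is the first coordinate, variable 4 is the
second one, variable 1 is a parameter. -/
theorem pairClass (𝕄 : GBModel) {Cs : ℕ → Set ZFSet} {R : (ℕ → ZFSet) → Prop}
    (h : Dfb 𝕄 Cs R) (hC : ∀ n, Cs n ∈ 𝕄.Cls) {a : ZFSet} (ha : a ∈ 𝕄.M) (b : ZFSet)
    (hb : b ∈ 𝕄.M) :
    ∃ C ∈ 𝕄.Cls, ∀ w t : ZFSet, w.pair t ∈ C ↔ w ∈ 𝕄.M ∧ t ∈ 𝕄.M ∧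
      R (Function.update (Function.update
        (fun n => if n = 0 then w.pair t else if n = 1 then a else b) 3 w) 4 t) := by
  refine ⟨_, Dfb.toCls (𝕄 := 𝕄) (Cs := Cs)
    (Dfb.ex 3 (Dfb.ex 4 (Dfb.and (Dfb.pairEq 0 3 4) h))) hC ha hb, fun w t => ?_⟩
  constructor
  · rintro ⟨_, w', hw', t', ht', he, hR⟩
    simp [Function.update, ZFSet.pair_inj] at he
    obtain ⟨rfl, rfl⟩ := he
    exact ⟨hw', ht', hR⟩
  · rintro ⟨hw, ht, hR⟩
    exact ⟨pairM hw ht, w, hw, t, ht, by simp [Function.update], hR⟩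

/-- Uniformization of witnesses for check names. -/
theorem bis_cover (𝕄 : GBModel) {one : ZFSet} (h1 : one ∈ 𝕄.M) {x : ZFSet} (hx : x ∈ 𝕄.M)
    (h : ∀ w : ZFSet, w ∈ x → ∃ f ∈ 𝕄.M, Bis one f ∧ ∃ s : ZFSet, w.pair s ∈ f) :
    ∃ f ∈ 𝕄.M, Bis one f ∧ ∀ w : ZFSet, w ∈ x → ∃ s : ZFSet, w.pair s ∈ f := by
  obtain ⟨C, hC, hC'⟩ := pairClass 𝕄 (Cs := fun _ => {f | f ∈ 𝕄.M ∧ Bis one f})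
    (Dfb.and (Dfb.cls 4 0) (Dfb.ex 5 (Dfb.pairMem 3 5 4))) (fun _ => bis_cls 𝕄 h1) h1 one h1
  simp [Function.update] at hC'
  obtain ⟨b, hb, hb1, hb2⟩ := imageSet 𝕄 hC hx (by
    intro w hw
    obtain ⟨f, hf, hB, s, hs⟩ := h w hw
    exact ⟨f, hf, (hC' w f).2 ⟨𝕄.transitive _ hx _ hw, hf, ⟨hf, hB⟩, s,
      (pairM_inv (𝕄.transitive _ hf _ hs)).2, hs⟩⟩)
  refine ⟨⋃₀ b, 𝕄.sUnion_mem b hb, ?_, ?_⟩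
  · intro u v huv
    obtain ⟨f, hf, huv⟩ := ZFSet.mem_sUnion.1 huv
    obtain ⟨w, _, hw⟩ := hb1 f hf
    obtain ⟨H1, H2⟩ := ((hC' w f).1 hw).2.2.1.2 u v huv
    refine ⟨fun t ht => ?_, fun w hw => ?_⟩
    · obtain ⟨w, hw, s, hs, hws⟩ := H1 t ht
      exact ⟨w, hw, s, hs, ZFSet.mem_sUnion.2 ⟨f, hf, hws⟩⟩
    · obtain ⟨s, hs, hws⟩ := H2 w hw
      exact ⟨s, ZFSet.mem_sUnion.2 ⟨f, hf, hs⟩, hws⟩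
  · intro w hw
    obtain ⟨f, hf, hwf⟩ := hb2 w hw
    obtain ⟨_, _, _, s, _, hs⟩ := (hC' w f).1 hwf
    exact ⟨s, ZFSet.mem_sUnion.2 ⟨f, hf, hs⟩⟩

/-- Every set of `M` has a check name in `M`. -/
theorem bis_exists (𝕄 : GBModel) {one : ZFSet} (h1 : one ∈ 𝕄.M) (x : ZFSet) :
    x ∈ 𝕄.M → ∃ f ∈ 𝕄.M, Bis one f ∧ ∃ s : ZFSet, x.pair s ∈ f := by
  induction x using ZFSet.inductionOn with
  | _ x ih =>
  intro hx
  obtain ⟨f, hf, hB, hcov⟩ := bis_cover 𝕄 h1 hx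
    (fun w hw => ih w hw (𝕄.transitive _ hx _ hw))
  obtain ⟨C, hC, hC'⟩ := pairClass 𝕄 (Cs := fun _ => (∅ : ZFSet).toSet)
    (Dfb.ex 5 (Dfb.and (Dfb.pairEq 4 5 1) (Dfb.pairMem 3 5 2))) (fun _ => empty_cls 𝕄) h1 f hf
  simp [Function.update] at hC'
  obtain ⟨b, hb, hb1, hb2⟩ := imageSet 𝕄 hC hx (by
    intro w hw
    obtain ⟨s, hs⟩ := hcov w hw
    have hm := pairM_inv (𝕄.transitive _ hf _ hs)
    exact ⟨s.pair one, pairM hm.2 h1, (hC' w _).2 ⟨hm.1, pairM hm.2 h1, s, hm.2, rfl, hs⟩⟩)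
  have hp : x.pair b ∈ 𝕄.M := pairM hx hb
  refine ⟨⋃₀ {f, {x.pair b, x.pair b}}, 𝕄.sUnion_mem _ (𝕄.pair_mem _ hf _
    (𝕄.pair_mem _ hp _ hp)), ?_, b, by simp⟩
  have hmem : ∀ z : ZFSet, z ∈ (⋃₀ {f, {x.pair b, x.pair b}} : ZFSet) ↔ z ∈ f ∨ z = x.pair b := by
    intro z; simp
  intro u v huv
  rw [hmem] at huv
  simp only [hmem]
  rcases huv with huv | huv
  · obtain ⟨H1, H2⟩ := hB u v huv
    refine ⟨fun t ht => ?_, fun w hw => ?_⟩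
    · obtain ⟨w, hw, s, hs, hws⟩ := H1 t ht
      exact ⟨w, hw, s, hs, Or.inl hws⟩
    · obtain ⟨s, hs, hws⟩ := H2 w hw
      exact ⟨s, Or.inl hs, hws⟩
  · obtain ⟨rfl, rfl⟩ := ZFSet.pair_inj.1 huv
    refine ⟨fun t ht => ?_, fun w hw => ?_⟩
    · obtain ⟨w, hw, hwt⟩ := hb1 t ht
      obtain ⟨_, _, s, _, hs, hws⟩ := (hC' w t).1 hwt
      exact ⟨w, hw, s, hs, Or.inl hws⟩
    · obtain ⟨t, ht, hwt⟩ := hb2 w hw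
      obtain ⟨_, _, s, _, hs, hws⟩ := (hC' w t).1 hwt
      exact ⟨s, Or.inl hws, hs ▸ ht⟩

/-! ### Names -/

theorem rank_fst_lt {τ p σ : ZFSet} (h : τ.pair p ∈ σ) : τ.rank < σ.rank := by
  have h1 : τ ∈ ({τ, p} : ZFSet) := by simp
  have h2 : ({τ, p} : ZFSet) ∈ τ.pair p := by rw [pair_eq']; simp
  exact (ZFSet.rank_lt_of_mem h1).trans ((ZFSet.rank_lt_of_mem h2).trans (ZFSet.rank_lt_of_mem h))

theorem isName_iff {S : Set ZFSet} {σ : ZFSet} :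
    IsName S σ ↔ ∀ x : ZFSet, x ∈ σ → ∃ τ p : ZFSet, x = τ.pair p ∧ p ∈ S ∧ IsName S τ := by
  unfold IsName
  conv_lhs => rw [IsNameAux]
  constructor
  · intro H x hx
    obtain ⟨τ, p, h, hp, _, hn⟩ := H x hx
    exact ⟨τ, p, h, hp, hn⟩
  · intro H x hx
    obtain ⟨τ, p, h, hp, hn⟩ := H x hx
    have hx' : x ∈ σ := hx
    exact ⟨τ, p, h, hp, rank_fst_lt (h ▸ hx'), hn⟩

theorem mem_nameEval {G : Set ZFSet} {σ y : ZFSet} :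
    y ∈ nameEval G σ ↔ ∃ τ p : ZFSet, p ∈ G ∧ τ.pair p ∈ σ ∧ y = nameEval G τ := by
  unfold nameEval
  conv_lhs => rw [nameEvalAux]
  unfold zimage
  rw [@ZFSet.mem_image _ (Classical.allZFSetDefinable _)]
  constructor
  · rintro ⟨τ, hτ, rfl⟩
    obtain ⟨_, p, hp, h⟩ := ZFSet.mem_sep.1 hτ
    exact ⟨τ, p, hp, h, by simp [rank_fst_lt h]⟩
  · rintro ⟨τ, p, hp, h, rfl⟩
    refine ⟨τ, ZFSet.mem_sep.2 ⟨?_, p, hp, h⟩, by simp [rank_fst_lt h]⟩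
    refine ZFSet.mem_sUnion.2 ⟨{τ, p}, ZFSet.mem_sUnion.2 ⟨_, h, ?_⟩, by simp⟩
    rw [pair_eq']; simp

theorem bis_name {S : Set ZFSet} {one f : ZFSet} (h1 : one ∈ S) (hB : Bis one f) (u : ZFSet) :
    ∀ v : ZFSet, u.pair v ∈ f → IsName S v := by
  induction u using ZFSet.inductionOn with
  | _ u ih =>
  intro v huv
  rw [isName_iff]
  intro t ht
  obtain ⟨w, hw, s, hs, hws⟩ := (hB u v huv).1 t ht
  exact ⟨s, one, hs, h1, ih w hw s hws⟩

theorem bis_eval {G : Set ZFSet} {one f : ZFSet} (h1 : one ∈ G) (hB : Bis one f) (u : ZFSet) :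
    ∀ v : ZFSet, u.pair v ∈ f → nameEval G v = u := by
  induction u using ZFSet.inductionOn with
  | _ u ih =>
  intro v huv
  ext y
  rw [mem_nameEval]
  constructor
  · rintro ⟨τ, p, hp, h, rfl⟩
    obtain ⟨w, hw, s, hs, hws⟩ := (hB u v huv).1 _ h
    obtain ⟨rfl, rfl⟩ := ZFSet.pair_inj.1 hs
    rw [ih w hw _ hws]
    exact hw
  · intro hy
    obtain ⟨s, hs, hsv⟩ := (hB u v huv).2 y hy
    exact ⟨s, one, h1, hsv, (ih y hy s hs).symm⟩

/-- The canonical name for `G ∩ A`. -/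
theorem exists_name (𝕄 : GBModel) (F : ClassForcing 𝕄) {A : ZFSet} (hA : A ∈ 𝕄.M)
    (hAP : ∀ a : ZFSet, a ∈ A → a ∈ F.P) :
    ∃ σ ∈ 𝕄.M, IsName F.P σ ∧ ∀ G : Set ZFSet, F.one ∈ G →
      ∀ y : ZFSet, y ∈ nameEval G σ ↔ y ∈ A ∧ y ∈ G := by
  have h1 : F.one ∈ 𝕄.M := 𝕄.classes_sub _ F.P_cls F.one_mem
  obtain ⟨f, hf, hB, hcov⟩ := bis_cover 𝕄 h1 hA
    (fun w hw => bis_exists 𝕄 h1 w (𝕄.transitive _ hA _ hw))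
  obtain ⟨C, hC, hC'⟩ := pairClass 𝕄 (Cs := fun _ => (∅ : ZFSet).toSet)
    (Dfb.ex 5 (Dfb.and (Dfb.pairEq 4 5 3) (Dfb.pairMem 3 5 2))) (fun _ => empty_cls 𝕄) h1 f hf
  simp [Function.update] at hC'
  obtain ⟨σ, hσ, hb1, hb2⟩ := imageSet 𝕄 hC hA (by
    intro w hw
    obtain ⟨s, hs⟩ := hcov w hw
    have hm := pairM_inv (𝕄.transitive _ hf _ hs)
    exact ⟨s.pair w, pairM hm.2 hm.1, (hC' w _).2 ⟨hm.1, pairM hm.2 hm.1, s, hm.2, rfl, hs⟩⟩)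
  refine ⟨σ, hσ, ?_, ?_⟩
  · rw [isName_iff]
    intro t ht
    obtain ⟨w, hw, hwt⟩ := hb1 t ht
    obtain ⟨_, _, s, _, hs, hws⟩ := (hC' w t).1 hwt
    exact ⟨s, w, hs, hAP w hw, bis_name F.one_mem hB w s hws⟩
  · intro G hG y
    rw [mem_nameEval]
    constructor
    · rintro ⟨τ, p, hp, h, rfl⟩
      obtain ⟨w, hw, hwt⟩ := hb1 _ h
      obtain ⟨_, _, s, _, hs, hws⟩ := (hC' w _).1 hwt
      obtain ⟨rfl, rfl⟩ := ZFSet.pair_inj.1 hs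
      rw [bis_eval hG hB _ _ hws]
      exact ⟨hw, hp⟩
    · rintro ⟨hy, hyG⟩
      obtain ⟨t, ht, hwt⟩ := hb2 y hy
      obtain ⟨_, _, s, _, hs, hws⟩ := (hC' y t).1 hwt
      exact ⟨s, y, hyG, hs ▸ ht, (bis_eval hG hB _ _ hws).symm⟩

/-! ### Generic filters -/

theorem exists_filter (𝕄 : GBModel) (F : ClassForcing 𝕄) {p : ZFSet} (hp : p ∈ F.P)
    (D : ℕ → Set ZFSet) (hD : ∀ n, ∀ q ∈ F.P, F.le q p → ∃ r ∈ F.P, r ∈ D n ∧ F.le r q) :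
    ∃ G : Set ZFSet, IsFilterOn F.P F.le G ∧ ∀ n, (G ∩ D n).Nonempty := by
  have step : ∀ n, ∀ q : {q // q ∈ F.P ∧ F.le q p}, ∃ r : {q // q ∈ F.P ∧ F.le q p},
      r.1 ∈ D n ∧ F.le r.1 q.1 := by
    rintro n ⟨q, hq, hqp⟩
    obtain ⟨r, hr, hrD, hrq⟩ := hD n q hq hqp
    exact ⟨⟨r, hr, F.le_trans _ _ _ hrq hqp⟩, hrD, hrq⟩
  choose g hg1 hg2 using step
  let s : ℕ → {q // q ∈ F.P ∧ F.le q p} := fun n =>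
    Nat.rec ⟨p, hp, F.le_refl p hp⟩ (fun n q => g n q) n
  have hs : ∀ n, s (n + 1) = g n (s n) := fun n => rfl
  have hmono : ∀ m n, m ≤ n → F.le (s n).1 (s m).1 := by
    intro m n hmn
    induction hmn with
    | refl => exact F.le_refl _ (s m).2.1
    | step _ ih => exact F.le_trans _ _ _ (hg2 _ _) ih
  refine ⟨{q | q ∈ F.P ∧ ∃ n, F.le (s n).1 q}, ⟨fun q hq => hq.1, ⟨p, hp, 0, F.le_refl p hp⟩,
    ?_, ?_⟩, ?_⟩
  · rintro q ⟨hq, n, hn⟩ r hr hqr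
    exact ⟨hr, n, F.le_trans _ _ _ hn hqr⟩
  · rintro q ⟨hq, n, hn⟩ r ⟨hr, m, hm⟩
    exact ⟨(s (max n m)).1, ⟨(s _).2.1, _, F.le_refl _ (s _).2.1⟩,
      F.le_trans _ _ _ (hmono _ _ (le_max_left _ _)) hn,
      F.le_trans _ _ _ (hmono _ _ (le_max_right _ _)) hm⟩
  · intro n
    exact ⟨(s (n + 1)).1, ⟨(s (n + 1)).2.1, n + 1, F.le_refl _ (s (n + 1)).2.1⟩, hg1 n (s n)⟩

/-- Conditions forcing `G ∩ A ≠ x`. -/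
def diag (𝕄 : GBModel) (F : ClassForcing 𝕄) (A x : ZFSet) : Set ZFSet :=
  {q | ∃ a : ZFSet, a ∈ A ∧ ((F.le q a ∧ a ∉ x) ∨ (¬ Compat F.P F.le q a ∧ a ∈ x))}

/-- If a notion of class forcing `ℙ` for a countable transitive model
`𝕄 = ⟨M, 𝒞⟩` of `GB⁻` adds no new sets, then `ℙ` has the set decision property. -/
theorem no_new_sets_implies_set_decision
    (𝕄 : GBModel) (F : ClassForcing 𝕄)
    (hnonew : ∀ G : Set ZFSet, IsGeneric 𝕄 F.P F.le G → MGen 𝕄 F.P G = 𝕄.M) :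
    SetDecisionProperty 𝕄 F := by
  intro p hp A hA hAP
  by_contra hcon
  push Not at hcon
  obtain ⟨σ, hσ, hσn, hσe⟩ := exists_name 𝕄 F hA hAP
  let 𝒟 : Set (Set ZFSet) := {D | D ∈ 𝕄.Cls ∧ DenseIn F.P F.le D} ∪ (diag 𝕄 F A) '' 𝕄.M
  have hcount : 𝒟.Countable :=
    (𝕄.countable_Cls.mono fun D hD => hD.1).union (𝕄.countable_M.image _)
  have hne : 𝒟.Nonempty := ⟨diag 𝕄 F A ∅, Or.inr ⟨∅, 𝕄.empty_mem, rfl⟩⟩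
  obtain ⟨D, hD⟩ := hcount.exists_eq_range hne
  have hdense : ∀ n, ∀ q ∈ F.P, F.le q p → ∃ r ∈ F.P, r ∈ D n ∧ F.le r q := by
    intro n q hq hqp
    have hn : D n ∈ 𝒟 := hD ▸ ⟨n, rfl⟩
    rcases hn with ⟨_, hsub, hd⟩ | ⟨x, hx, hxe⟩
    · obtain ⟨r, hr, hrq⟩ := hd q hq
      exact ⟨r, hsub hr, hr, hrq⟩
    · rw [← hxe]
      have hnd := hcon q hq hqp
      unfold Decides leStar at hnd
      push Not at hnd
      obtain ⟨a, ha, ⟨r, hr, hrq, hra⟩, ⟨r', hr', hrq', hra'⟩⟩ := hnd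
      by_cases hax : a ∈ x
      · exact ⟨r, hr, ⟨a, ha, Or.inr ⟨hra, hax⟩⟩, hrq⟩
      · exact ⟨r', hr', ⟨a, ha, Or.inl ⟨hra', hax⟩⟩, hrq'⟩
  obtain ⟨G, hG, hGD⟩ := exists_filter 𝕄 F hp D hdense
  have hmeet : ∀ E ∈ 𝒟, (G ∩ E).Nonempty := by
    intro E hE
    rw [hD] at hE
    obtain ⟨n, rfl⟩ := hE
    exact hGD n
  have hgen : IsGeneric 𝕄 F.P F.le G := ⟨hG, fun E hE hEd => hmeet E (Or.inl ⟨hE, hEd⟩)⟩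
  obtain ⟨hGP, ⟨g, hg⟩, hGup, hGdir⟩ := hG
  have hone : F.one ∈ G := hGup g hg _ F.one_mem (F.le_one g (hGP hg))
  have hx : nameEval G σ ∈ 𝕄.M := by
    rw [← hnonew G hgen]
    exact ⟨σ, hσ, hσn, rfl⟩
  obtain ⟨q, hqG, a, ha, ⟨hqa, hax⟩ | ⟨hqa, hax⟩⟩ := hmeet _ (Or.inr ⟨_, hx, rfl⟩)
  · exact hax ((hσe G hone a).2 ⟨ha, hGup q hqG a (hAP a ha) hqa⟩)
  · obtain ⟨r, hr, h1, h2⟩ := hGdir q hqG a ((hσe G hone a).1 hax).2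
    exact hqa ⟨r, hGP hr, h1, h2⟩

end CF
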